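/- arXiv:2505.15189 — 3 statements merged into one kernel-verified Lean document; each statement's English description precedes it below -/
import Mathlib

section
/- Let n ≥ 3 and let B be an n×n real matrix. Suppose that for every symmetric n×n real matrix H with trace zero, the product B·H is again a symmetric matrix. Then there exists a constant c ∈ ℝ such that B = c·I, where I is the n×n identity matrix. -/
/-!
It suffices to test `B` against the matrices `E i j + E j i` with `i ≠ j`, which are symmetric
and traceless. Column `j` of `B * (E i j + E j i)` is column `i` of `B`, column `i` is column `j`
of `B`, and all other columns vanish. Comparing the entries `(i, j)` and `(j, i)` gives
`B i i = B j j`; comparing `(k, j)` and `(j, k)` for a third index `k` gives `B k i = 0`.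
Since `3 ≤ n`, any two distinct indices `k`, `i` admit such a `j`, so `B` is diagonal with
constant diagonal.
-/

/-- If `n ≥ 3` and `B` is an `n × n` real matrix such that `B * H` is
symmetric for every symmetric traceless `H`, then `B` is a scalar multiple of the
identity matrix. -/
theorem stmt_0 (n : ℕ) (hn : 3 ≤ n) (B : Matrix (Fin n) (Fin n) ℝ)
    (hB : ∀ H : Matrix (Fin n) (Fin n) ℝ, H.IsSymm → H.trace = 0 → (B * H).IsSymm) :
    ∃ c : ℝ, B = c • (1 : Matrix (Fin n) (Fin n) ℝ) := by
  have key : ∀ i j a b : Fin n, i ≠ j →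
      (if j = b then B a i else 0) + (if i = b then B a j else 0) =
        (if j = a then B b i else 0) + (if i = a then B b j else 0) := by
    intro i j a b hij
    have h := hB (Matrix.single i j 1 + Matrix.single j i 1)
      (by simp [Matrix.IsSymm, Matrix.transpose_add, add_comm])
      (by simp [Matrix.trace_add, hij, hij.symm])
    have h' := h.apply b a
    simpa [Matrix.mul_apply, Matrix.single_apply, ite_and, mul_add, Finset.sum_add_distrib] using h'
  have hdiag : ∀ i j : Fin n, B i i = B j j := by
    intro i j
    by_cases hij : i = j
    · rw [hij]
    · simpa [hij, Ne.symm hij] using key i j i j hij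
  have hoff : ∀ k i : Fin n, k ≠ i → B k i = 0 := by
    intro k i hki
    obtain ⟨j, hj⟩ : ∃ j : Fin n, j ∉ ({k, i} : Finset (Fin n)) := by
      by_contra! hall
      have hle := Finset.card_le_card (fun j _ => hall j : Finset.univ ⊆ {k, i})
      have htwo := Finset.card_le_two (a := k) (b := i)
      rw [Finset.card_univ, Fintype.card_fin] at hle
      omega
    simp only [Finset.mem_insert, Finset.mem_singleton, not_or] at hj
    simpa [hj.1, hj.2, Ne.symm hj.2, hki, hki.symm] using key i j k j (Ne.symm hj.2)
  refine ⟨B ⟨0, by omega⟩ ⟨0, by omega⟩, ?_⟩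
  ext a b
  by_cases hab : a = b
  · subst hab
    simpa using hdiag a _
  · simpa [hab] using hoff a b hab
end

section
/- Let T > 0 and let γ : [0,T] → ℝⁿ be an injective C¹ curve with γ'(t) ≠ 0 for all t ∈ [0,T]. Then for every x ∈ ℝⁿ the following are equivalent: (1) x lies on the curve, i.e., x ∈ γ([0,T]); (2) for every open set U containing x there exists a smooth compactly supported vector field A : ℝⁿ → ℝⁿ with support contained in U such that exp( i·∫₀ᵀ ⟨A(γ(t)), γ'(t)⟩ dt ) ≠ 1, where exp is the complex exponential, i the imaginary unit, and ⟨·,·⟩ the Euclidean inner product. -/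
/-!
Off the compact curve, a field supported in its complement vanishes along `γ`, so there is no phase
shift. At a point `x = γ t₀`, take `A = c φ v` with `v = γ'(t₀)` and `φ ≥ 0` a bump function with
`φ x = 1`. The times at which `⟨v, γ'⟩ ≤ 0` form a compact set whose image misses `x` by
injectivity; supporting `φ` away from that image makes the integrand nonnegative on `[0,T]` and
positive at `t₀`. The integral is thus nonzero, and `c` normalizes it to `1`, where `exp i ≠ 1`.
-/

/-- Every neighbourhood of a point of the curve supports a field with positive integral along it. -/
lemma exists_field_integral_pos (n : ℕ) (T : ℝ) (hT : 0 < T) (γ : ℝ → (Fin n → ℝ))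
    (hγ : ContDiff ℝ 1 γ) (hinj : Set.InjOn γ (Set.Icc 0 T))
    (t₀ : ℝ) (ht₀ : t₀ ∈ Set.Icc 0 T) (hd : deriv γ t₀ ≠ 0)
    (U : Set (Fin n → ℝ)) (hU : IsOpen U) (hx : γ t₀ ∈ U) :
    ∃ A : (Fin n → ℝ) → (Fin n → ℝ), ContDiff ℝ (⊤ : ℕ∞) A ∧ HasCompactSupport A ∧
      tsupport A ⊆ U ∧ 0 < ∫ t in (0 : ℝ)..T, ∑ j, A (γ t) j * deriv γ t j := by
  have hdc : Continuous (deriv γ) := hγ.continuous_deriv le_rfl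
  have hcj : ∀ j, Continuous fun t => deriv γ t j := fun j => (continuous_apply j).comp hdc
  set g : ℝ → ℝ := fun t => ∑ j, deriv γ t₀ j * deriv γ t j with hg
  have hgc : Continuous g := continuous_finsetSum _ fun j _ => continuous_const.mul (hcj j)
  have hg0 : 0 < g t₀ := by
    obtain ⟨j, hj⟩ := Function.ne_iff.mp hd
    exact Finset.sum_pos' (fun i _ => mul_self_nonneg _)
      ⟨j, Finset.mem_univ _, mul_self_pos.mpr hj⟩
  have hK : IsCompact (γ '' (Set.Icc 0 T ∩ {t | g t ≤ 0})) :=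
    (isCompact_Icc.inter_right (isClosed_le hgc continuous_const)).image hγ.continuous
  have hxK : γ t₀ ∉ γ '' (Set.Icc 0 T ∩ {t | g t ≤ 0}) := by
    rintro ⟨t, ⟨ht, htg⟩, he⟩
    have h := hinj ht ht₀ he
    subst h
    exact absurd hg0 (not_lt.mpr htg)
  obtain ⟨φ, hφs, hφc, hφd, hφr, hφ1⟩ := exists_contDiff_tsupport_subset (n := ⊤)
    ((hU.inter hK.isClosed.isOpen_compl).mem_nhds ⟨hx, hxK⟩)
  have hφ0 : ∀ y, 0 ≤ φ y := fun y => (hφr ⟨y, rfl⟩).1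
  refine ⟨fun y => φ y • deriv γ t₀, hφd.smul contDiff_const, hφc.smul_right,
    (tsupport_smul_subset_left φ _).trans (hφs.trans Set.inter_subset_left), ?_⟩
  have he : ∀ t, ∑ j, (φ (γ t) • deriv γ t₀) j * deriv γ t j = φ (γ t) * g t := fun t => by
    simp only [hg, Finset.mul_sum, Pi.smul_apply, smul_eq_mul, mul_assoc]
  simp only [he]
  refine intervalIntegral.integral_pos hT
    ((hφd.continuous.comp hγ.continuous).mul hgc).continuousOn ?_ ⟨t₀, ht₀, by rwa [hφ1, one_mul]⟩
  intro t ht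
  by_cases h : g t ≤ 0
  · have : φ (γ t) = 0 := by
      by_contra h0
      exact (hφs (subset_tsupport φ h0)).2 ⟨t, ⟨Set.Ioc_subset_Icc_self ht, h⟩, rfl⟩
    simp [this]
  · exact mul_nonneg (hφ0 _) (not_le.mp h).le


/-- Euclidean core of Theorem 1.2: a point `x` lies on the injective
regular `C¹` curve `γ : [0,T] → ℝⁿ` if and only if for every open set `U ∋ x` there is a
smooth compactly supported vector field `A` with support in `U` producing a nontrivial
phase shift `exp(i ∫₀ᵀ ⟨A(γ(t)), γ'(t)⟩ dt) ≠ 1`. -/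
theorem stmt_8 (n : ℕ) (T : ℝ) (hT : 0 < T) (γ : ℝ → (Fin n → ℝ))
    (hγ : ContDiff ℝ 1 γ) (hinj : Set.InjOn γ (Set.Icc 0 T))
    (hγ' : ∀ t ∈ Set.Icc (0 : ℝ) T, deriv γ t ≠ 0) (x : Fin n → ℝ) :
    x ∈ γ '' Set.Icc 0 T ↔
      ∀ U : Set (Fin n → ℝ), IsOpen U → x ∈ U →
        ∃ A : (Fin n → ℝ) → (Fin n → ℝ), ContDiff ℝ (⊤ : ℕ∞) A ∧ HasCompactSupport A ∧
          tsupport A ⊆ U ∧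
          Complex.exp (Complex.I *
            ((∫ t in (0 : ℝ)..T, ∑ j, A (γ t) j * deriv γ t j : ℝ) : ℂ)) ≠ 1 := by
  constructor
  · rintro ⟨t₀, ht₀, rfl⟩ U hU hx
    obtain ⟨A, hA, hAc, hAs, hpos⟩ :=
      exists_field_integral_pos n T hT γ hγ hinj t₀ ht₀ (hγ' t₀ ht₀) U hU hx
    set I := ∫ t in (0 : ℝ)..T, ∑ j, A (γ t) j * deriv γ t j with hI
    refine ⟨fun y => I⁻¹ • A y, (contDiff_const (c := I⁻¹)).smul hA, hAc.smul_left (f := fun _ => I⁻¹),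
      (tsupport_smul_subset_right (fun _ => I⁻¹) A).trans hAs, ?_⟩
    have h1 : ∫ t in (0 : ℝ)..T, ∑ j, (I⁻¹ • A (γ t)) j * deriv γ t j = 1 := by
      simp only [Pi.smul_apply, smul_eq_mul, mul_assoc, ← Finset.mul_sum,
        intervalIntegral.integral_const_mul]
      exact inv_mul_cancel₀ hpos.ne'
    rw [h1]
    intro h
    have him := congrArg Complex.im h
    rw [Complex.ofReal_one, mul_one, Complex.exp_im] at him
    simp only [Complex.I_re, Complex.I_im, Real.exp_zero, one_mul, Complex.one_im] at him
    exact (Real.sin_pos_of_pos_of_lt_pi one_pos (by linarith [Real.pi_gt_three])).ne' him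
  · intro h
    by_contra hx
    obtain ⟨A, -, -, hAs, hne⟩ := h _
      (isCompact_Icc.image hγ.continuous).isClosed.isOpen_compl hx
    apply hne
    have h0 : ∫ t in (0 : ℝ)..T, ∑ j, A (γ t) j * deriv γ t j = 0 := by
      refine intervalIntegral.integral_zero_ae (Filter.Eventually.of_forall fun t ht => ?_)
      rw [Set.uIoc_of_le hT.le] at ht
      have : A (γ t) = 0 := by
        by_contra hA
        exact hAs (subset_tsupport A hA) ⟨t, Set.Ioc_subset_Icc_self ht, rfl⟩
      simp [this]
    rw [h0]
    simp
end

section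
/- Let T > 0 and let γ : [0,T] → ℝⁿ be a C¹ curve with γ'(t) ≠ 0 for all t ∈ [0,T]. Then for every x ∈ ℝⁿ the following are equivalent: (1) x lies on the curve, i.e., x ∈ γ([0,T]); (2) for every open set U containing x there exists a smooth compactly supported map h : ℝⁿ → Symₙ(ℝ) into the symmetric n×n real matrices, with support contained in U, such that ∫₀ᵀ ⟨h(γ(t))·γ'(t), γ'(t)⟩ dt ≠ 0, where ⟨·,·⟩ is the Euclidean inner product. -/
/-!
The easy direction uses that `γ '' [0,T]` is compact, hence closed: off the curve, a tensor supported
in the complement vanishes along it, so every integral is zero. Conversely, at `x = γ t₀` take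
`h = φ · I` with `φ ≥ 0` a smooth bump function supported in `U` and `φ x = 1`. The integrand becomes
`φ (γ t) * ∑ j, (γ' t j) ^ 2`, which is continuous, nonnegative, and positive at `t₀` because
`γ' t₀ ≠ 0`; its integral is therefore positive (`intervalIntegral.integral_pos`).
-/


/-- Euclidean core of Theorem 1.3: a point `x` lies on the regular `C¹`
curve `γ : [0,T] → ℝⁿ` if and only if for every open set `U ∋ x` there is a smooth
compactly supported symmetric-matrix-valued map `h` with support in `U` such that
`∫₀ᵀ ⟨h(γ(t))·γ'(t), γ'(t)⟩ dt ≠ 0`. -/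
theorem stmt_9 (n : ℕ) (T : ℝ) (hT : 0 < T) (γ : ℝ → (Fin n → ℝ))
    (hγ : ContDiff ℝ 1 γ)
    (hγ' : ∀ t ∈ Set.Icc (0 : ℝ) T, deriv γ t ≠ 0) (x : Fin n → ℝ) :
    x ∈ γ '' Set.Icc 0 T ↔
      ∀ U : Set (Fin n → ℝ), IsOpen U → x ∈ U →
        ∃ h : (Fin n → ℝ) → Fin n → Fin n → ℝ, ContDiff ℝ (⊤ : ℕ∞) h ∧ HasCompactSupport h ∧
          tsupport h ⊆ U ∧ (∀ y j k, h y j k = h y k j) ∧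
          (∫ t in (0 : ℝ)..T, ∑ j, ∑ k, h (γ t) j k * deriv γ t k * deriv γ t j) ≠ 0 := by
  constructor
  · rintro ⟨t₀, ht₀, rfl⟩ U hU hxU
    obtain ⟨φ, hφU, hφc, hφs, hφr, hφ1⟩ :=
      exists_contDiff_tsupport_subset (n := (⊤ : ℕ∞)) (hU.mem_nhds hxU)
    have hφ0 : ∀ y, 0 ≤ φ y := fun y => (hφr ⟨y, rfl⟩).1
    have hd : Continuous (deriv γ) := hγ.continuous_deriv le_rfl
    let M : Fin n → Fin n → ℝ := fun j k => if j = k then 1 else 0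
    refine ⟨fun y => φ y • M, hφs.smul contDiff_const, hφc.smul_right,
      (tsupport_smul_subset_left φ fun _ => M).trans hφU, ?_, ?_⟩
    · intro y j k
      simp [M, eq_comm]
    · have hint : ∀ t, (∑ j, ∑ k, (φ (γ t) • M) j k * deriv γ t k * deriv γ t j)
          = φ (γ t) * ∑ j, deriv γ t j ^ 2 := by
        intro t
        rw [Finset.mul_sum]
        refine Finset.sum_congr rfl fun j _ => ?_
        rw [Finset.sum_eq_single j]
        · simp [M]
          ring
        · intro k _ hk
          simp [M, hk.symm]
        · simp
      simp only [hint]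
      refine (intervalIntegral.integral_pos hT ?_ ?_ ⟨t₀, ht₀, ?_⟩).ne'
      · have hφγ : Continuous fun t => φ (γ t) := hφs.continuous.comp hγ.continuous
        exact (hφγ.mul (continuous_finsetSum _ fun j _ =>
          ((continuous_apply j).comp hd).pow 2)).continuousOn
      · intro t _
        exact mul_nonneg (hφ0 _) (Finset.sum_nonneg fun j _ => sq_nonneg _)
      · obtain ⟨j, hj⟩ := Function.ne_iff.mp (hγ' t₀ ht₀)
        rw [hφ1, one_mul]
        exact Finset.sum_pos' (fun i _ => sq_nonneg _)
          ⟨j, Finset.mem_univ j, sq_pos_of_ne_zero hj⟩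
  · intro H
    by_contra hx
    have hcl : IsClosed (γ '' Set.Icc 0 T) :=
      (isCompact_Icc.image hγ.continuous).isClosed
    obtain ⟨h, -, -, hsupp, -, hne⟩ := H _ hcl.isOpen_compl hx
    refine hne (intervalIntegral.integral_zero_ae (Filter.Eventually.of_forall fun t ht => ?_))
    rw [Set.uIoc_of_le hT.le] at ht
    have h0 : h (γ t) = 0 := image_eq_zero_of_notMem_tsupport fun hmem =>
      hsupp hmem ⟨t, Set.Ioc_subset_Icc_self ht, rfl⟩
    simp [h0]
end
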